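/- Consider the step image f(t₁,t₂) = 1_{{t₂ < 1/2}} with n even, and suppose δ_n = O(n^a) for some a < 1. Then for any threshold t_n > 0, with probability tending to 1 as n → ∞, at least c·n of the pixels in the row J = {(m, j*−1) : 1 ≤ m ≤ n} just below the edge receive SNLM weight w^S_{i*,j*}(m, j*−1) = 1, for some constant c > 0 independent of n; concretely, P( Σ_{m=1}^n w^S_{i*,j*}(m,j*−1) ≥ n p₀ − n^{(3+a)/4} ) → 1, where p₀ > 0 is a constant independent of n. -/

import Mathlib

open MeasureTheory ProbabilityTheory Real Finset Filter

noncomputable section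

/-- The pixel grid: indices are taken mod `n` (periodic extension). -/
abbrev Px (n : ℕ) := ZMod n × ZMod n

/-- The distribution of the i.i.d. `N(0, σ²)` noise array. -/
def noise (n : ℕ) [NeZero n] (σ : ℝ) : Measure (Px n → ℝ) :=
  Measure.pi fun _ => gaussianReal 0 (Real.toNNReal (σ ^ 2))

/-- The Hölder ball `Hölder^α(C)` of functions on `ℝ`. -/
def HolderBall (α C : ℝ) : Set (ℝ → ℝ) :=
  {h | ∀ t t' : ℝ,
    |iteratedDeriv ⌊α⌋₊ h t - iteratedDeriv ⌊α⌋₊ h t'| ≤ C * |t - t'| ^ (α - (⌊α⌋₊ : ℝ))}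

/-- Edge contours of the Horizon class `H^α(C)`. -/
def HorizonFns (α C : ℝ) : Set (ℝ → ℝ) := HolderBall α C ∩ HolderBall 1 1

/-- The Horizon image `f_h(t₁,t₂) = 1_{t₂ < h t₁}`. -/
def horizonImg (h : ℝ → ℝ) (t₁ t₂ : ℝ) : ℝ := if t₂ < h t₁ then 1 else 0

/-- `x_{i,j}`: average of `f` over `Pixel(i,j)`. -/
def pixelAvg (n : ℕ) [NeZero n] (f : ℝ → ℝ → ℝ) (p : Px n) : ℝ :=
  (n : ℝ) ^ 2 * ∫ t₁ in ((p.1.val : ℝ) / n)..(((p.1.val : ℝ) + 1) / n),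
      ∫ t₂ in ((p.2.val : ℝ) / n)..(((p.2.val : ℝ) + 1) / n), f t₁ t₂

/-- The pixel array of the Horizon image `f_h`. -/
def horizonPixels (n : ℕ) [NeZero n] (h : ℝ → ℝ) : Px n → ℝ :=
  pixelAvg n (horizonImg h)

/-- The risk `R_n(f, f̂) = E[(1/n²) Σ (x_{i,j} - f̂_{i,j})²]` of an estimator `est`
which maps observations `y = x + z` to an estimated pixel array. -/
def risk (n : ℕ) [NeZero n] (σ : ℝ) (x : Px n → ℝ)
    (est : (Px n → ℝ) → Px n → ℝ) : ℝ :=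
  ∫ z, (1 / (n : ℝ) ^ 2) * ∑ p : Px n, (x p - est (fun q => x q + z q) p) ^ 2 ∂(noise n σ)


/-- The square window of offsets `{-δ,…,δ}²`. -/
def offsets (δ : ℕ) : Finset (ℤ × ℤ) :=
  Finset.Icc (-(δ : ℤ)) (δ : ℤ) ×ˢ Finset.Icc (-(δ : ℤ)) (δ : ℤ)

/-- Shift a pixel by an integer offset (periodic extension). -/
def shift {n : ℕ} (p : Px n) (o : ℤ × ℤ) : Px n :=
  (p.1 + (o.1 : ZMod n), p.2 + (o.2 : ZMod n))

/-- The `δ`-neighborhood distance `d²_δ(y_p, y_q)` (center element removed),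
normalized by `ρ² = (2δ+1)² - 1`. -/
def nlmDist2 (n : ℕ) (δ : ℕ) (y : Px n → ℝ) (p q : Px n) : ℝ :=
  (1 / (((2 * δ + 1) ^ 2 - 1 : ℕ) : ℝ)) *
    ((∑ o ∈ offsets δ, |y (shift p o) - y (shift q o)| ^ 2) - |y p - y q| ^ 2)

/-- The (hard-thresholded) NLM weight: `1` if `d²_δ(y_p, y_q) ≤ 2σ² + t`, else `0`. -/
def nlmWeight (n : ℕ) (δ : ℕ) (σ t : ℝ) (y : Px n → ℝ) (p q : Px n) : ℝ :=
  if nlmDist2 n δ y p q ≤ 2 * σ ^ 2 + t then 1 else 0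

/-- The NLM estimate at pixel `p` (search over the whole image). -/
def nlmEst (n : ℕ) [NeZero n] (δ : ℕ) (σ t : ℝ) (y : Px n → ℝ) (p : Px n) : ℝ :=
  (∑ q : Px n, nlmWeight n δ σ t y p q * y q) / (∑ q : Px n, nlmWeight n δ σ t y p q)

/-- The semi-oracle `δ`-neighborhood distance `d̄²_δ(y_p, y_q)`: the reference
neighborhood uses the noise-free values `x`, the other the observations `y`. -/
def snlmDist2 (n : ℕ) (δ : ℕ) (x y : Px n → ℝ) (p q : Px n) : ℝ :=
  (1 / (((2 * δ + 1) ^ 2 - 1 : ℕ) : ℝ)) *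
    ((∑ o ∈ offsets δ, |x (shift p o) - y (shift q o)| ^ 2) - (x p - y q) ^ 2)

/-- The semi-oracle NLM weight: `1` if `d̄²_δ(y_p, y_q) ≤ σ² + t`, else `0`. -/
def snlmWeight (n : ℕ) (δ : ℕ) (σ t : ℝ) (x y : Px n → ℝ) (p q : Px n) : ℝ :=
  if snlmDist2 n δ x y p q ≤ σ ^ 2 + t then 1 else 0

/-- The semi-oracle NLM estimate at pixel `p` (search over the whole image). -/
def snlmEst (n : ℕ) [NeZero n] (δ : ℕ) (σ t : ℝ) (x y : Px n → ℝ) (p : Px n) : ℝ :=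
  (∑ q : Px n, snlmWeight n δ σ t x y p q * y q) /
    (∑ q : Px n, snlmWeight n δ σ t x y p q)

/-- The risk of the semi-oracle NLM on the image with pixel array `x`. -/
def snlmRisk (n : ℕ) [NeZero n] (σ : ℝ) (δ : ℕ) (t : ℝ) (x : Px n → ℝ) : ℝ :=
  ∫ z, (1 / (n : ℝ) ^ 2) * ∑ p : Px n,
    (x p - snlmEst n δ σ t x (fun q => x q + z q) p) ^ 2 ∂(noise n σ)

/-- The pixel array of the step image `f(t₁,t₂) = 1_{t₂ < 1/2}` (for `n` even this
is exactly the array of pixel averages): `x_{i,j} = 1` iff `j < n/2`. -/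
def stepX (n : ℕ) : Px n → ℝ := fun p => if 2 * p.2.val < n then 1 else 0

/-- The row index `j* = ⌈n/2⌉` of the pixels just above the edge of the step image. -/
def jstar (n : ℕ) : ZMod n := ((n + 1) / 2 : ℕ)

/-!
Compare a window just below the edge with the noise-free window just above it. The two clean images
differ only along the central row `R` of the punctured window `W`, so with `ξ` the noise in the
window the weight is `1` as soon as `∑_W (1_R + ξ)² ≤ #W σ²`. Here `#R = 2δ ≤ √#W`. The reflection
`ξ ↦ -ξ` fixes `∑_W ξ²` and flips the cross term `2 ∑_R ξ`, so at the cost of a factor `1/2` it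
suffices that `∑_W ξ²` lies `√#W` below its mean. By the central limit theorem this has probability
bounded away from `0` for large windows; small windows are handled by independence. Hence every
weight has mean at least some `q > 0`, uniformly in `n` and `δ`. Weights whose windows do not
overlap are independent, so the sum over the row has variance at most `n (4δ + 1) = o(n²)`, and
Chebyshev's inequality concludes.
-/

open scoped NNReal

/-! ### Sums of independent random variables -/

lemma identDistrib_sum_of_card_eq {ι κ Ω Ω' E : Type*} {mΩ : MeasurableSpace Ω}
    {mΩ' : MeasurableSpace Ω'} {P : Measure Ω} {P' : Measure Ω'} [MeasurableSpace E]
    [AddCommMonoid E] [MeasurableAdd₂ E] {X : ι → Ω → E} {Y : κ → Ω' → E} {s : Finset ι}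
    {t : Finset κ} (hst : #s = #t) (hX : iIndepFun X P) (hY : iIndepFun Y P')
    (hXY : ∀ i j, IdentDistrib (X i) (Y j) P P') :
    IdentDistrib (fun ω => ∑ i ∈ s, X i ω) (fun ω => ∑ j ∈ t, Y j ω) P P' := by
  have hpi : IdentDistrib (fun ω (i : s) => X i ω) (fun ω i => Y (equivOfCardEq hst i) ω) P P' :=
    .pi (fun i => hXY _ _) (hX.precomp Subtype.val_injective)
      (hY.precomp (Subtype.val_injective.comp (equivOfCardEq hst).injective))
  convert hpi.comp (u := fun f : s → E => ∑ i, f i) (by fun_prop) using 2 with ω ω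
  · exact (sum_coe_sort s (X · ω)).symm
  · rw [← sum_coe_sort t, ← (equivOfCardEq hst).sum_comp]
    rfl

lemma isOpenPosMeasure_gaussianReal (μ : ℝ) {v : ℝ≥0} (hv : v ≠ 0) :
    (gaussianReal μ v).IsOpenPosMeasure :=
  (gaussianReal_absolutelyContinuous' μ hv).isOpenPosMeasure

lemma exists_eventually_le_measureReal_sum_lt {Ω : Type*} {mΩ : MeasurableSpace Ω}
    {P : Measure Ω} [IsProbabilityMeasure P] {X : ℕ → Ω → ℝ} (hX : MemLp (X 0) 2 P)
    (hindep : iIndepFun X P) (hident : ∀ k, IdentDistrib (X k) (X 0) P P)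
    (hvar : Var[X 0; P] ≠ 0) (L : ℝ) :
    ∃ q > 0, ∀ᶠ N : ℕ in atTop,
      q ≤ P.real {ω | ∑ k ∈ range N, X k ω < N * P[X 0] - L * √N} := by
  set w := Var[X 0; P].toNNReal
  have hw : w ≠ 0 := (Real.toNNReal_pos.2 ((variance_nonneg _ _).lt_of_ne' hvar)).ne'
  have := isOpenPosMeasure_gaussianReal 0 hw
  have hpos : 0 < gaussianReal 0 w (Set.Iio (-L)) := isOpen_Iio.measure_pos _ Set.nonempty_Iio
  have hclt := tendstoInDistribution_inv_sqrt_mul_sum_sub (Y := id) HasLaw.id hX hindep hident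
  have hliminf := ProbabilityMeasure.le_liminf_measure_open_of_tendsto hclt.tendsto
    (isOpen_Iio (a := -L))
  simp only [ProbabilityMeasure.coe_mk, Measure.map_id] at hliminf
  have hhalf := (ENNReal.half_lt_self hpos.ne' (measure_ne_top _ _)).trans_le hliminf
  refine ⟨(gaussianReal 0 w (Set.Iio (-L)) / 2).toReal,
    ENNReal.toReal_pos (ENNReal.half_pos hpos.ne').ne' (by finiteness), ?_⟩
  have hm (k : ℕ) : AEMeasurable (X k) P := (hident k).aemeasurable_fst
  filter_upwards [eventually_lt_of_lt_liminf hhalf, eventually_gt_atTop 0] with N hN hN0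
  rw [Measure.map_apply_of_aemeasurable (by fun_prop) measurableSet_Iio] at hN
  refine ENNReal.toReal_mono (measure_ne_top _ _) (hN.le.trans (measure_mono fun ω hω => ?_))
  have hsqrt : 0 < √(N : ℝ) := by positivity
  rw [Set.mem_preimage, Set.mem_Iio, inv_mul_lt_iff₀ hsqrt] at hω
  simp only [Set.mem_ofPred_eq]
  linarith

lemma exists_le_measureReal_sum_lt_of_hasLaw {ν : Measure ℝ} [IsProbabilityMeasure ν]
    (hν : MemLp id 2 ν) (hvar : Var[id; ν] ≠ 0) (L : ℝ) :
    ∃ q > 0, ∃ N₀ : ℕ, ∀ {ι Ω : Type*} {_ : MeasurableSpace Ω} {P : Measure Ω}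
      {X : ι → Ω → ℝ}, iIndepFun X P → (∀ i, HasLaw (X i) ν P) → ∀ s : Finset ι, N₀ ≤ #s →
        q ≤ P.real {ω | ∑ i ∈ s, X i ω < #s * ν[id] - L * √(#s)} := by
  obtain ⟨Ω', _, P', Y, -, hYlaw, hYindep, _⟩ := exists_iid ℕ ν
  obtain ⟨q, hq, hlarge⟩ := exists_eventually_le_measureReal_sum_lt (X := Y)
    ((HasLaw.id.identDistrib (hYlaw 0)).memLp_snd hν) hYindep
    (fun k => (hYlaw k).identDistrib (hYlaw 0)) (by rwa [(hYlaw 0).variance_eq]) L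
  obtain ⟨N₀, hN₀⟩ := eventually_atTop.1 hlarge
  refine ⟨q, hq, N₀, fun {ι Ω _ P X} hX hXlaw s hs => ?_⟩
  have hsum := identDistrib_sum_of_card_eq (card_range #s).symm hX hYindep
    fun i k => (hXlaw i).identDistrib (hYlaw k)
  refine (hN₀ #s hs).trans_eq ?_
  rw [(hYlaw 0).integral_eq]
  exact congrArg ENNReal.toReal (hsum.measure_mem_eq measurableSet_Iio).symm

lemma measureReal_div_two_le_inter_odd_nonpos {E : Type*} [MeasurableSpace E] [InvolutiveNeg E]
    [MeasurableNeg E] {μ : Measure E} [IsFiniteMeasure μ] [μ.IsNegInvariant] {A : Set E}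
    (hA : MeasurableSet A) (hneg : Neg.neg ⁻¹' A = A) {f : E → ℝ} (hf : Measurable f)
    (hodd : f.Odd) : μ.real A / 2 ≤ μ.real (A ∩ {x | f x ≤ 0}) := by
  have hmeas : MeasurableSet (A ∩ {x | f x ≤ 0}) := hA.inter (measurableSet_le hf (by fun_prop))
  have hreflect : μ.real (Neg.neg ⁻¹' (A ∩ {x | f x ≤ 0})) = μ.real (A ∩ {x | f x ≤ 0}) :=
    (Measure.measurePreserving_neg μ).measureReal_preimage hmeas.nullMeasurableSet
  have hcover : A ⊆ (A ∩ {x | f x ≤ 0}) ∪ Neg.neg ⁻¹' (A ∩ {x | f x ≤ 0}) := by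
    intro x hx
    rw [Set.preimage_inter, hneg]
    rcases le_total (f x) 0 with h | h
    · exact Or.inl ⟨hx, h⟩
    · exact Or.inr ⟨hx, by simpa [hodd x] using h⟩
  have := (measureReal_mono (μ := μ) hcover).trans (measureReal_union_le _ _)
  linarith

lemma variance_ne_zero_of_continuous {E : Type*} [TopologicalSpace E] [MeasurableSpace E]
    {μ : Measure E} [IsProbabilityMeasure μ] [μ.IsOpenPosMeasure] {f : E → ℝ} (hf : Continuous f)
    (hf2 : MemLp f 2 μ) {x y : E} (hxy : f x ≠ f y) : Var[f; μ] ≠ 0 := by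
  intro h
  have hconst : f = fun _ => μ[f] :=
    (hf.ae_eq_iff_eq μ continuous_const).1 (ae_eq_integral_of_variance_eq_zero hf2 h)
  exact hxy ((congrFun hconst x).trans (congrFun hconst y).symm)

lemma indepFun_of_dependsOn {ι : Type*} [Fintype ι] {Ω : ι → Type*}
    [∀ i, MeasurableSpace (Ω i)] {μ : ∀ i, Measure (Ω i)} [∀ i, IsProbabilityMeasure (μ i)]
    {β γ : Type*} [MeasurableSpace β] [MeasurableSpace γ] {f : (∀ i, Ω i) → β}
    {g : (∀ i, Ω i) → γ} (hf : Measurable f) (hg : Measurable g) {S T : Finset ι}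
    (hfS : DependsOn f S) (hgT : DependsOn g T) (hST : Disjoint S T) :
    IndepFun f g (Measure.pi μ) := by
  classical
  obtain ⟨x₀⟩ := nonempty_of_isProbabilityMeasure (Measure.pi μ)
  have hind := (iIndepFun_pi (μ := μ) (X := fun _ => id) fun _ => aemeasurable_id).indepFun_finset
    S T hST fun i => measurable_pi_apply i
  convert hind.comp (φ := fun y => f (Function.updateFinset x₀ S y))
    (ψ := fun y => g (Function.updateFinset x₀ T y)) (hf.comp measurable_updateFinset)
    (hg.comp measurable_updateFinset) using 1
  · exact funext fun x => hfS fun i hi => by simp [Function.updateFinset, mem_coe.1 hi]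
  · exact funext fun x => hgT fun i hi => by simp [Function.updateFinset, mem_coe.1 hi]

lemma variance_sum_le_of_covariance_eq_zero {ι Ω : Type*} [Fintype ι] {mΩ : MeasurableSpace Ω}
    {P : Measure Ω} [IsProbabilityMeasure P] {X : ι → Ω → ℝ} (hX : ∀ i, Measurable (X i))
    (h01 : ∀ i ω, X i ω ∈ Set.Icc 0 1) {D : ι → Finset ι} {d : ℕ} (hD : ∀ i, #(D i) ≤ d)
    (hcov : ∀ i, ∀ j ∉ D i, cov[X i, X j; P] = 0) :
    Var[fun ω => ∑ i, X i ω; P] ≤ Fintype.card ι * d := by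
  have hmem (i : ι) : MemLp (X i) 2 P :=
    memLp_of_bounded (ae_of_all _ (h01 i)) (hX i).aestronglyMeasurable 2
  have hcov_le (i j : ι) : cov[X i, X j; P] ≤ 1 := by
    have hprod : P[X i * X j] ≤ 1 := by
      simpa using integral_mono ((hmem i).integrable_mul (hmem j)) (integrable_const (1 : ℝ))
        fun ω => mul_le_one₀ (h01 i ω).2 (h01 j ω).1 (h01 j ω).2
    have hmean (k : ι) : 0 ≤ P[X k] := integral_nonneg fun ω => (h01 k ω).1
    rw [covariance_eq_sub (hmem i) (hmem j)]
    linarith [mul_nonneg (hmean i) (hmean j)]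
  have hrow (i : ι) : ∑ j, cov[X i, X j; P] ≤ d := calc
    ∑ j, cov[X i, X j; P] = ∑ j ∈ D i, cov[X i, X j; P] :=
      (sum_subset (subset_univ _) fun j _ => hcov i j).symm
    _ ≤ #(D i) := by simpa using sum_le_card_nsmul (D i) _ 1 fun j _ => hcov_le i j
    _ ≤ d := mod_cast hD i
  rw [variance_fun_sum hmem]
  simpa using sum_le_card_nsmul univ _ (d : ℝ) fun i _ => hrow i

lemma measureReal_sum_lt_le_of_covariance_eq_zero {ι Ω : Type*} [Fintype ι] [Nonempty ι]
    {mΩ : MeasurableSpace Ω} {P : Measure Ω} [IsProbabilityMeasure P] {X : ι → Ω → ℝ}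
    (hX : ∀ i, Measurable (X i)) (h01 : ∀ i ω, X i ω ∈ Set.Icc 0 1) {D : ι → Finset ι} {d : ℕ}
    (hD : ∀ i, #(D i) ≤ d) (hcov : ∀ i, ∀ j ∉ D i, cov[X i, X j; P] = 0) {p : ℝ} (hp : 0 < p)
    (hmean : ∀ i, 2 * p ≤ P[X i]) :
    P.real {ω | ∑ i, X i ω < Fintype.card ι * p} ≤ d / (Fintype.card ι * p ^ 2) := by
  set n : ℝ := (Fintype.card ι : ℝ)
  have hn : 0 < n := Nat.cast_pos.2 Fintype.card_pos
  have hmem (i : ι) : MemLp (X i) 2 P :=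
    memLp_of_bounded (ae_of_all _ (h01 i)) (hX i).aestronglyMeasurable 2
  have hmean_sum : 2 * (n * p) ≤ ∫ ω, ∑ i, X i ω ∂P := by
    rw [integral_finsetSum _ fun i _ => (hmem i).integrable one_le_two]
    have := card_nsmul_le_sum univ (fun i => P[X i]) (2 * p) fun i _ => hmean i
    rw [card_univ, nsmul_eq_mul] at this
    linarith
  have hchebyshev := meas_ge_le_variance_div_sq (μ := P) (memLp_finsetSum univ fun i _ => hmem i)
    (mul_pos hn hp)
  refine ENNReal.toReal_le_of_le_ofReal (by positivity) <|
    (measure_mono fun ω (hω : ∑ i, X i ω < n * p) => ?_).trans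
      (hchebyshev.trans (ENNReal.ofReal_le_ofReal ?_))
  · simp only [Set.mem_ofPred_eq]
    rw [abs_sub_comm]
    exact le_abs.2 (Or.inl (by linarith))
  · calc Var[fun ω => ∑ i, X i ω; P] / (n * p) ^ 2
        ≤ n * d / (n * p) ^ 2 := by
          gcongr
          exact variance_sum_le_of_covariance_eq_zero hX h01 hD hcov
      _ = d / (n * p ^ 2) := by field_simp

/-! ### Gaussian white noise -/

/-- White noise indexed by a finite type: the law of independent centred Gaussian variables with
common variance `v`. The array `noise n σ` is the case `ι = Px n`, `v = σ ^ 2`. -/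
abbrev whiteNoise (ι : Type*) [Fintype ι] (v : ℝ≥0) : Measure (ι → ℝ) :=
  Measure.pi fun _ => gaussianReal 0 v

instance isNegInvariant_gaussianReal_zero (v : ℝ≥0) : (gaussianReal 0 v).IsNegInvariant where
  neg_eq_self := by simpa [Measure.neg] using gaussianReal_map_neg (μ := 0) (v := v)

lemma memLp_sq_gaussianReal (v : ℝ≥0) : MemLp (fun x => x ^ 2) 2 (gaussianReal 0 v) := by
  have h4 : MemLp (fun x : ℝ => x) (2 * 2) (gaussianReal 0 v) :=
    memLp_id_gaussianReal' _ (by finiteness)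
  simpa [ENNReal.mul_div_cancel_right] using h4.norm_rpow_div 2

lemma integral_sq_gaussianReal (v : ℝ≥0) : ∫ x, x ^ 2 ∂gaussianReal 0 v = v := by
  have h := variance_fun_id_gaussianReal (μ := 0) (v := v)
  rwa [variance_of_integral_eq_zero (by fun_prop) integral_id_gaussianReal] at h

lemma exists_le_whiteNoise_sum_sq_lt {v : ℝ≥0} (hv : v ≠ 0) (L : ℝ) :
    ∃ q > 0, ∃ N₀ : ℕ, ∀ {ι : Type*} [Fintype ι] (s : Finset ι), N₀ ≤ #s →
      q ≤ (whiteNoise ι v).real {ω | ∑ i ∈ s, ω i ^ 2 < #s * v - L * √(#s)} := by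
  have := isOpenPosMeasure_gaussianReal 0 hv
  set ν := (gaussianReal 0 v).map (· ^ 2)
  have hsq : HasLaw (fun x : ℝ => x ^ 2) ν (gaussianReal 0 v) := ⟨by fun_prop, rfl⟩
  have : IsProbabilityMeasure ν := Measure.isProbabilityMeasure_map (by fun_prop)
  have hmean : ν[id] = (v : ℝ) := hsq.integral_eq.symm.trans (integral_sq_gaussianReal v)
  have hmem : MemLp id 2 ν := (hsq.identDistrib .id).memLp_snd (memLp_sq_gaussianReal v)
  have hvar : Var[id; ν] ≠ 0 := hsq.variance_eq ▸ variance_ne_zero_of_continuous (x := 0) (y := 1)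
    (by fun_prop) (memLp_sq_gaussianReal v) (by norm_num)
  obtain ⟨q, hq, N₀, h⟩ := exists_le_measureReal_sum_lt_of_hasLaw hmem hvar L
  refine ⟨q, hq, N₀, fun {ι} _ s hs => ?_⟩
  have hindep : iIndepFun (fun i (ω : ι → ℝ) => ω i ^ 2) (whiteNoise ι v) :=
    iIndepFun_pi (X := fun _ x => x ^ 2) fun _ => by fun_prop
  simpa only [hmean] using h hindep
    (fun i => hsq.fun_comp (measurePreserving_eval (fun _ => gaussianReal 0 v) i).hasLaw) s hs

lemma exists_pow_card_le_whiteNoise_sum_sq {v : ℝ≥0} (hv : v ≠ 0) :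
    ∃ r : ℝ, 0 < r ∧ r ≤ 1 ∧ ∀ {ι : Type*} [Fintype ι] [DecidableEq ι] (R W : Finset ι),
      r ^ #W ≤ (whiteNoise ι v).real
        {ω | ∑ i ∈ W, ((if i ∈ R then 1 else 0) + ω i) ^ 2 ≤ #W * (v : ℝ)} := by
  have := isOpenPosMeasure_gaussianReal 0 hv
  have hv_sqrt : 0 < √(v : ℝ) := Real.sqrt_pos.2 (NNReal.coe_pos.2 (pos_iff_ne_zero.2 hv))
  let ball (a : ℝ) : Set ℝ := Metric.ball (-a) √v
  have hball (a : ℝ) : 0 < (gaussianReal 0 v).real (ball a) :=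
    ENNReal.toReal_pos (Metric.measure_ball_pos _ _ hv_sqrt).ne' (measure_ne_top _ _)
  refine ⟨min ((gaussianReal 0 v).real (ball 1)) ((gaussianReal 0 v).real (ball 0)),
    lt_min (hball 1) (hball 0), (min_le_left _ _).trans measureReal_le_one,
    fun {ι} _ _ R W => ?_⟩
  let a (i : ι) : ℝ := if i ∈ R then 1 else 0
  calc min ((gaussianReal 0 v).real (ball 1)) ((gaussianReal 0 v).real (ball 0)) ^ #W
      ≤ ∏ i ∈ W, (gaussianReal 0 v).real (ball (a i)) := by
        rw [← prod_const]
        refine prod_le_prod (fun _ _ => by positivity) fun i _ => ?_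
        by_cases hi : i ∈ R <;> simp [a, hi]
    _ = (whiteNoise ι v).real (Set.pi W fun i => ball (a i)) := by
        simp only [Measure.real]
        rw [Measure.pi_pi_finset, ENNReal.toReal_prod]
    _ ≤ _ := by
        refine measureReal_mono fun ω hω => ?_
        rw [Set.mem_ofPred_eq, ← nsmul_eq_mul]
        refine sum_le_card_nsmul W _ _ fun i hi => ?_
        have hdist : |a i + ω i| < √v := by
          simpa [ball, Real.dist_eq, add_comm] using hω i (mem_coe.2 hi)
        rw [← Real.sq_sqrt v.coe_nonneg]
        exact sq_le_sq.2 (hdist.le.trans (le_abs_self _))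

lemma exists_le_whiteNoise_sum_indicator_add_sq {v : ℝ≥0} (hv : v ≠ 0) :
    ∃ q > 0, ∀ {ι : Type*} [Fintype ι] [DecidableEq ι] {R W : Finset ι}, R ⊆ W →
      #R ^ 2 ≤ #W → q ≤ (whiteNoise ι v).real
        {ω | ∑ i ∈ W, ((if i ∈ R then 1 else 0) + ω i) ^ 2 ≤ #W * (v : ℝ)} := by
  obtain ⟨q, hq, N₀, hlarge⟩ := exists_le_whiteNoise_sum_sq_lt hv 1
  obtain ⟨r, hr, hr1, hsmall⟩ := exists_pow_card_le_whiteNoise_sum_sq hv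
  refine ⟨min (q / 2) (r ^ N₀), by positivity, fun {ι} _ _ R W hRW hcard => ?_⟩
  rcases le_total #W N₀ with hW | hW
  · exact (min_le_right _ _).trans ((pow_le_pow_of_le_one hr.le hr1 hW).trans (hsmall R W))
  have hR : (#R : ℝ) ≤ √(#W) := Real.le_sqrt_of_sq_le (mod_cast hcard)
  have hexpand (ω : ι → ℝ) : ∑ i ∈ W, ((if i ∈ R then 1 else 0) + ω i) ^ 2 =
      ∑ i ∈ W, ω i ^ 2 + #R + 2 * ∑ i ∈ R, ω i := by
    have hterm (i : ι) : ((if i ∈ R then 1 else 0) + ω i) ^ 2 =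
        ω i ^ 2 + if i ∈ R then 1 + 2 * ω i else 0 := by split_ifs <;> ring
    simp_rw [hterm]
    rw [sum_add_distrib, sum_ite_mem, inter_eq_right.2 hRW, sum_add_distrib, ← mul_sum]
    simp [add_assoc]
  let A : Set (ι → ℝ) := {ω | ∑ i ∈ W, ω i ^ 2 < #W * v - 1 * √(#W)}
  calc min (q / 2) (r ^ N₀) ≤ (whiteNoise ι v).real A / 2 :=
        (min_le_left _ _).trans (by linarith [hlarge W hW])
    _ ≤ (whiteNoise ι v).real (A ∩ {ω | ∑ i ∈ R, ω i ≤ 0}) :=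
        measureReal_div_two_le_inter_odd_nonpos
          (measurableSet_lt (by fun_prop) (by fun_prop)) (by simp)
          (by fun_prop) fun ω => by simp
    _ ≤ _ := measureReal_mono fun ω ⟨hA, hodd⟩ => by
        simp only [A, Set.mem_ofPred_eq, hexpand] at hA hodd ⊢
        linarith

/-! ### Windows of pixels -/

/-- The offsets of the window `{-δ,…,δ}²` without its centre, over which `snlmDist2` averages. -/
def puncturedWindow (δ : ℕ) : Finset (ℤ × ℤ) := (offsets δ).erase (0, 0)

/-- The part of the punctured window in the same row as the centre: when the window straddles the
edge, these are the offsets at which the two reference images differ. -/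
def centralRow (δ : ℕ) : Finset (ℤ × ℤ) := {o ∈ puncturedWindow δ | o.2 = 0}

/-- The columns within periodic distance `2δ` of column `m`, where a window of radius `δ` can meet
one centred in column `m`. -/
def nearbyColumns (n δ : ℕ) (m : ZMod n) : Finset (ZMod n) :=
  (Icc (-(2 * δ : ℤ)) (2 * δ)).image fun a : ℤ => m + a

lemma mem_offsets {δ : ℕ} {o : ℤ × ℤ} :
    o ∈ offsets δ ↔ (-(δ : ℤ) ≤ o.1 ∧ o.1 ≤ δ) ∧ -(δ : ℤ) ≤ o.2 ∧ o.2 ≤ δ := by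
  simp [offsets]

lemma puncturedWindow_subset_offsets (δ : ℕ) : puncturedWindow δ ⊆ offsets δ := erase_subset _ _

lemma centralRow_subset_puncturedWindow (δ : ℕ) : centralRow δ ⊆ puncturedWindow δ :=
  filter_subset _ _

lemma card_puncturedWindow (δ : ℕ) : #(puncturedWindow δ) = (2 * δ + 1) ^ 2 - 1 := by
  have hside : ((δ : ℤ) + 1 + δ).toNat = 2 * δ + 1 := by omega
  rw [puncturedWindow, card_erase_of_mem (by simp [mem_offsets]), offsets, card_product,
    Int.card_Icc, sub_neg_eq_add, hside, sq]

lemma card_centralRow (δ : ℕ) : #(centralRow δ) = 2 * δ := by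
  have hrow : centralRow δ = (Icc (-(δ : ℤ)) δ).erase 0 ×ˢ {0} := by
    ext ⟨a, b⟩
    simp only [centralRow, puncturedWindow, mem_filter, mem_erase, mem_offsets, mem_product,
      mem_Icc, mem_singleton, ne_eq, Prod.mk.injEq]
    omega
  rw [hrow, card_product, card_erase_of_mem (by simp), Int.card_Icc, card_singleton]
  omega

lemma card_centralRow_sq_le (δ : ℕ) : #(centralRow δ) ^ 2 ≤ #(puncturedWindow δ) := by
  rw [card_centralRow, card_puncturedWindow]
  exact Nat.le_sub_of_add_le (by ring_nf; omega)

lemma card_nearbyColumns_le (n δ : ℕ) (m : ZMod n) : #(nearbyColumns n δ m) ≤ 4 * δ + 1 := by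
  refine card_image_le.trans ?_
  rw [Int.card_Icc]
  omega

lemma injOn_shift {n δ : ℕ} (hδ : 2 * δ < n) (p : Px n) :
    Set.InjOn (shift p) (offsets δ : Set (ℤ × ℤ)) := by
  have hcast {a b : ℤ} (ha : -(δ : ℤ) ≤ a ∧ a ≤ δ) (hb : -(δ : ℤ) ≤ b ∧ b ≤ δ)
      (hab : (a : ZMod n) = b) : a = b := by
    rw [ZMod.intCast_eq_intCast_iff_dvd_sub] at hab
    have := Int.eq_zero_of_abs_lt_dvd hab (by rw [abs_lt]; omega)
    omega
  intro o ho o' ho' heq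
  simp only [mem_coe, mem_offsets] at ho ho'
  simp only [shift, Prod.mk.injEq, add_right_inj] at heq
  exact Prod.ext (hcast ho.1 ho'.1 heq.1) (hcast ho.2 ho'.2 heq.2)

lemma disjoint_image_shift_puncturedWindow {n δ : ℕ} {p q : Px n}
    (hpq : q.1 ∉ nearbyColumns n δ p.1) :
    Disjoint ((puncturedWindow δ).image (shift p)) ((puncturedWindow δ).image (shift q)) := by
  refine disjoint_left.2 fun r hp hq => hpq ?_
  obtain ⟨a, ha, rfl⟩ := mem_image.1 hp
  obtain ⟨b, hb, hba⟩ := mem_image.1 hq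
  have ha' := mem_offsets.1 (puncturedWindow_subset_offsets δ ha)
  have hb' := mem_offsets.1 (puncturedWindow_subset_offsets δ hb)
  refine mem_image.2 ⟨a.1 - b.1, mem_Icc.2 (by omega), ?_⟩
  have hcol : q.1 + (b.1 : ZMod n) = p.1 + a.1 := congrArg Prod.fst hba
  push_cast
  linear_combination -hcol

/-! ### The semi-oracle distance and weight -/

lemma snlmDist2_eq_sum_puncturedWindow (n δ : ℕ) (x y : Px n → ℝ) (p q : Px n) :
    snlmDist2 n δ x y p q =
      (∑ o ∈ puncturedWindow δ, (x (shift p o) - y (shift q o)) ^ 2) / #(puncturedWindow δ) := by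
  have hcentre (r : Px n) : shift r (0, 0) = r := by simp [shift]
  have hmem : (0, 0) ∈ offsets δ := by simp [mem_offsets]
  simp only [snlmDist2, sq_abs]
  rw [← card_puncturedWindow, ← sum_erase_add _ _ hmem, hcentre, hcentre, add_sub_cancel_right,
    one_div_mul_eq_div, puncturedWindow]

lemma snlmWeight_mem_Icc (n δ : ℕ) (σ t : ℝ) (x y : Px n → ℝ) (p q : Px n) :
    snlmWeight n δ σ t x y p q ∈ Set.Icc 0 1 := by
  unfold snlmWeight
  split_ifs <;> simp

lemma measurable_snlmWeight (n δ : ℕ) (σ t : ℝ) (x : Px n → ℝ) (p q : Px n) :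
    Measurable fun z : Px n → ℝ => snlmWeight n δ σ t x (fun r => x r + z r) p q := by
  simp only [snlmWeight, snlmDist2_eq_sum_puncturedWindow]
  exact .ite (measurableSet_le (by fun_prop) measurable_const) measurable_const measurable_const

lemma dependsOn_snlmWeight (n δ : ℕ) (σ t : ℝ) (x : Px n → ℝ) (p q : Px n) :
    DependsOn (fun z : Px n → ℝ => snlmWeight n δ σ t x (fun r => x r + z r) p q)
      ((puncturedWindow δ).image (shift q)) := by
  intro z z' hzz'
  have hsum : ∑ o ∈ puncturedWindow δ, (x (shift p o) - (x (shift q o) + z (shift q o))) ^ 2 =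
      ∑ o ∈ puncturedWindow δ, (x (shift p o) - (x (shift q o) + z' (shift q o))) ^ 2 :=
    sum_congr rfl fun o ho => by rw [hzz' _ (mem_coe.2 (mem_image_of_mem _ ho))]
  simp only [snlmWeight, snlmDist2_eq_sum_puncturedWindow, hsum]

instance isProbabilityMeasure_noise (n : ℕ) [NeZero n] (σ : ℝ) :
    IsProbabilityMeasure (noise n σ) :=
  inferInstanceAs (IsProbabilityMeasure (whiteNoise (Px n) (σ ^ 2).toNNReal))

lemma integral_snlmWeight {n : ℕ} [NeZero n] (δ : ℕ) (σ t : ℝ) (x : Px n → ℝ) (p q : Px n) :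
    ∫ z, snlmWeight n δ σ t x (fun r => x r + z r) p q ∂noise n σ =
      (noise n σ).real {z | snlmDist2 n δ x (fun r => x r + z r) p q ≤ σ ^ 2 + t} := by
  rw [← integral_indicator_one]
  · rfl
  · simp only [snlmDist2_eq_sum_puncturedWindow]
    exact measurableSet_le (by fun_prop) measurable_const

lemma covariance_snlmWeight_eq_zero {n δ : ℕ} [NeZero n] (σ t : ℝ) (x : Px n → ℝ)
    (p p' : Px n) {q q' : Px n} (hqq' : q'.1 ∉ nearbyColumns n δ q.1) :
    cov[fun z => snlmWeight n δ σ t x (fun r => x r + z r) p q,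
      fun z => snlmWeight n δ σ t x (fun r => x r + z r) p' q'; noise n σ] = 0 := by
  have hmem (p q : Px n) :
      MemLp (fun z => snlmWeight n δ σ t x (fun r => x r + z r) p q) 2 (noise n σ) :=
    memLp_of_bounded (ae_of_all _ fun z => snlmWeight_mem_Icc ..)
      (measurable_snlmWeight ..).aestronglyMeasurable 2
  exact (indepFun_of_dependsOn (measurable_snlmWeight ..) (measurable_snlmWeight ..)
    (dependsOn_snlmWeight ..) (dependsOn_snlmWeight ..)
    (disjoint_image_shift_puncturedWindow hqq')).covariance_eq_zero (hmem ..) (hmem ..)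

/-! ### The step image -/

lemma stepX_intCast {n : ℕ} (i : ZMod n) {r : ℤ} (hr0 : 0 ≤ r) (hrn : r < n) :
    stepX n (i, (r : ZMod n)) = if 2 * r < n then 1 else 0 := by
  lift r to ℕ using hr0
  rw [stepX, Int.cast_natCast, ZMod.val_natCast_of_lt (mod_cast hrn)]
  norm_cast

lemma stepX_shift_jstar {n δ : ℕ} (hδ : 2 * δ + 2 ≤ n) (i : ZMod n) {o : ℤ × ℤ}
    (ho : o ∈ offsets δ) :
    stepX n (shift (i, jstar n) o) = if o.2 < 0 then 1 else 0 := by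
  rw [mem_offsets] at ho
  have hrow : jstar n + (o.2 : ZMod n) = (((((n + 1) / 2 : ℕ) : ℤ) + o.2 : ℤ) : ZMod n) := by
    rw [jstar, Int.cast_add, Int.cast_natCast]
  rw [shift, hrow, stepX_intCast _ (by omega) (by omega)]
  exact if_congr (by omega) rfl rfl

lemma stepX_shift_jstar_sub_one {n δ : ℕ} (hδ : 2 * δ + 2 ≤ n) (m : ZMod n) {o : ℤ × ℤ}
    (ho : o ∈ offsets δ) :
    stepX n (shift (m, jstar n - 1) o) = if o.2 ≤ 0 then 1 else 0 := by
  rw [mem_offsets] at ho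
  have hrow :
      jstar n - 1 + (o.2 : ZMod n) = (((((n + 1) / 2 : ℕ) : ℤ) - 1 + o.2 : ℤ) : ZMod n) := by
    rw [jstar, Int.cast_add, Int.cast_sub, Int.cast_one, Int.cast_natCast]
  rw [shift, hrow, stepX_intCast _ (by omega) (by omega)]
  exact if_congr (by omega) rfl rfl

lemma snlmDist2_stepX_jstar {n δ : ℕ} (hδ : 2 * δ + 2 ≤ n) (i m : ZMod n) (z : Px n → ℝ) :
    snlmDist2 n δ (stepX n) (fun q => stepX n q + z q) (i, jstar n) (m, jstar n - 1) =
      (∑ o ∈ puncturedWindow δ,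
        ((if o ∈ centralRow δ then 1 else 0) + z (shift (m, jstar n - 1) o)) ^ 2) /
          #(puncturedWindow δ) := by
  rw [snlmDist2_eq_sum_puncturedWindow]
  congr 1
  refine sum_congr rfl fun o ho => ?_
  have ho' := puncturedWindow_subset_offsets δ ho
  have hmem : o ∈ centralRow δ ↔ o.2 = 0 := by simp [centralRow, ho]
  rw [stepX_shift_jstar hδ i ho', stepX_shift_jstar_sub_one hδ m ho']
  rcases lt_trichotomy o.2 0 with h | h | h
  · simp [hmem, h, h.le, h.ne]
  · simp only [hmem, h]
    norm_num
    ring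
  · simp [hmem, h.not_ge, h.not_gt, h.ne']

lemma exists_le_noise_integral_snlmWeight {σ : ℝ} (hσ : σ ≠ 0) :
    ∃ q > 0, ∀ {n : ℕ} [NeZero n] {δ : ℕ} {t : ℝ}, 2 * δ + 2 ≤ n → 0 ≤ t → ∀ i m : ZMod n,
      q ≤ ∫ z, snlmWeight n δ σ t (stepX n) (fun q => stepX n q + z q) (i, jstar n)
        (m, jstar n - 1) ∂noise n σ := by
  have hv : (σ ^ 2).toNNReal ≠ 0 := (Real.toNNReal_pos.2 (by positivity)).ne'
  obtain ⟨q, hq, hwindow⟩ := exists_le_whiteNoise_sum_indicator_add_sq hv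
  refine ⟨q, hq, fun {n} _ {δ t} hδ ht i m => ?_⟩
  let s := shift (m, jstar n - 1)
  have hinj : Set.InjOn s (puncturedWindow δ) :=
    (injOn_shift (by omega) _).mono (mod_cast puncturedWindow_subset_offsets δ)
  have hRW := centralRow_subset_puncturedWindow δ
  have hmem {o : ℤ × ℤ} (ho : o ∈ puncturedWindow δ) :
      s o ∈ (centralRow δ).image s ↔ o ∈ centralRow δ := by
    rw [← mem_coe, coe_image, hinj.mem_image_iff (mod_cast hRW) (mem_coe.2 ho), mem_coe]
  have hcard : #((centralRow δ).image s) ^ 2 ≤ #((puncturedWindow δ).image s) := by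
    rw [card_image_of_injOn hinj, card_image_of_injOn (hinj.mono (mod_cast hRW))]
    exact card_centralRow_sq_le δ
  refine (hwindow (image_subset_image hRW) hcard).trans ?_
  rw [integral_snlmWeight]
  refine measureReal_mono (μ := noise n σ) fun z hz => ?_
  rw [Set.mem_ofPred_eq, sum_image hinj, card_image_of_injOn hinj,
    Real.coe_toNNReal _ (sq_nonneg σ), sum_congr rfl fun o ho => by rw [if_congr (hmem ho) rfl rfl],
    mul_comm] at hz
  rw [Set.mem_ofPred_eq, snlmDist2_stepX_jstar hδ]
  exact (div_le_of_le_mul₀ (by positivity) (sq_nonneg σ) hz).trans (le_add_of_nonneg_right ht)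

lemma exists_noise_sum_snlmWeight_lt_le {σ : ℝ} (hσ : σ ≠ 0) :
    ∃ p₀ > 0, ∀ {n : ℕ} [NeZero n] (δ : ℕ) {t : ℝ}, 0 ≤ t → ∀ i : ZMod n,
      (noise n σ).real {z | ∑ m : ZMod n, snlmWeight n δ σ t (stepX n)
        (fun q => stepX n q + z q) (i, jstar n) (m, jstar n - 1) < n * p₀} ≤
          (4 * δ + 1) / (n * p₀ ^ 2) := by
  obtain ⟨q, hq, hmean⟩ := exists_le_noise_integral_snlmWeight hσ
  refine ⟨min (q / 2) (1 / 2), by positivity, fun {n} _ δ {t} ht i => ?_⟩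
  set p₀ := min (q / 2) (1 / 2)
  have hp₀ : 0 < p₀ := by positivity
  have hn : (0 : ℝ) < n := Nat.cast_pos.2 (NeZero.pos n)
  -- A window with `n < 2 * δ + 2` may wrap around the image, but then the bound exceeds `1`.
  rcases lt_or_ge n (2 * δ + 2) with hδ | hδ
  · refine measureReal_le_one.trans ((one_le_div (by positivity)).2 ?_)
    have hp₀_sq : p₀ ^ 2 ≤ (1 / 2) ^ 2 := by gcongr; exact min_le_right _ _
    have hδ' : (n : ℝ) ≤ 2 * δ + 1 := by exact_mod_cast Nat.lt_succ_iff.1 hδ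
    nlinarith
  have h := measureReal_sum_lt_le_of_covariance_eq_zero (P := noise n σ) (d := 4 * δ + 1)
    (fun m => measurable_snlmWeight n δ σ t (stepX n) (i, jstar n) (m, jstar n - 1))
    (fun m z => snlmWeight_mem_Icc ..) (card_nearbyColumns_le n δ)
    (fun m m' hm => covariance_snlmWeight_eq_zero σ t (stepX n) _ _ hm) hp₀
    fun m => le_trans (by linarith [min_le_left (q / 2) (1 / 2)]) (hmean hδ ht i m)
  simpa [ZMod.card] using h

lemma isLittleO_natCast_of_le_mul_rpow {a c : ℝ} (ha : a < 1) {u : ℕ → ℝ} (hu0 : ∀ n, 0 ≤ u n)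
    (hu : ∀ n : ℕ, u n ≤ c * (n : ℝ) ^ a) : u =o[atTop] fun n : ℕ => (n : ℝ) := by
  have hO : u =O[atTop] fun n : ℕ => (n : ℝ) ^ a := .of_bound c <| .of_forall fun n => by
    rw [norm_of_nonneg (hu0 n), norm_of_nonneg (by positivity)]
    exact hu n
  have ho : (fun x : ℝ => x ^ a) =o[atTop] fun x => x := by
    refine Asymptotics.isLittleO_of_tendsto'
      ((eventually_ne_atTop 0).mono fun x hx h => absurd h hx) ?_
    refine (tendsto_rpow_neg_atTop (sub_pos.2 ha)).congr' ?_
    filter_upwards [eventually_ne_atTop 0] with x hx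
    rw [neg_sub, rpow_sub_one hx]
  exact hO.trans_isLittleO (ho.comp_tendsto tendsto_natCast_atTop_atTop)

theorem snlm_below_edge_weights_corollary_general {σ : ℝ} (hσ : σ ≠ 0) :
    ∃ p₀ : ℝ, 0 < p₀ ∧ ∀ δ : ℕ → ℕ, (fun n => (δ n : ℝ)) =o[atTop] (fun n => (n : ℝ)) →
      ∀ t : ℕ → ℝ, (∀ n, 0 ≤ t n) →
      ∀ ε : ℝ, 0 < ε → ∃ N : ℕ, ∀ (n : ℕ) [NeZero n], N ≤ n → ∀ i : ZMod n,
        1 - ε ≤ (noise n σ).real {z | n * p₀ ≤ ∑ m : ZMod n, snlmWeight n (δ n) σ (t n) (stepX n)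
          (fun q => stepX n q + z q) (i, jstar n) (m, jstar n - 1)} := by
  obtain ⟨p₀, hp₀, hbound⟩ := exists_noise_sum_snlmWeight_lt_le hσ
  refine ⟨p₀, hp₀, fun δ hδ t ht ε hε => ?_⟩
  have hlim : Tendsto (fun n : ℕ => (4 * δ n + 1) / (n * p₀ ^ 2)) atTop (nhds 0) := by
    have := ((hδ.tendsto_div_nhds_zero.const_mul 4).add
      tendsto_one_div_atTop_nhds_zero_nat).div_const (p₀ ^ 2)
    rw [mul_zero, zero_add, zero_div] at this
    exact this.congr fun n => by rw [← mul_div_assoc, ← add_div, div_div]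
  obtain ⟨N, hN⟩ := eventually_atTop.1 (hlim.eventually_le_const hε)
  refine ⟨N, fun n _ hn i => ?_⟩
  have hlower := probReal_compl_eq_one_sub (μ := noise n σ) <| measurableSet_lt
    (Finset.measurable_fun_sum univ fun m _ =>
      measurable_snlmWeight n (δ n) σ (t n) (stepX n) (i, jstar n) (m, jstar n - 1))
    (measurable_const (a := n * p₀))
  simp only [Set.compl_ofPred, not_lt] at hlower
  linarith [hbound (δ n) (ht n) i, hN n hn]

/-- Corollary 1: for the step image `1_{t₂<1/2}` with `n` even and
`δ_n = O(n^a)`, `a < 1`, for any thresholds `t_n > 0`, with probability tending to `1`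
(as `n → ∞` along even `n`) at least `Θ(n)` of the pixels just below the edge receive
SNLM weight `1`: `P(Σ_m w^S_{i*,j*}(m, j*-1) ≥ n p₀ - n^{(3+a)/4}) → 1`, where
`p₀ > 0` is a constant independent of `n`. -/
theorem snlm_below_edge_weights_corollary (σ : ℝ) (hσ : 0 < σ) :
    ∃ p₀ : ℝ, 0 < p₀ ∧ ∀ (a : ℝ), a < 1 → ∀ δ : ℕ → ℕ,
      (∃ c : ℝ, ∀ n : ℕ, (δ n : ℝ) ≤ c * (n : ℝ) ^ a) →
      ∀ t : ℕ → ℝ, (∀ n, 0 < t n) →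
      ∀ ε : ℝ, 0 < ε → ∃ N : ℕ, ∀ (n : ℕ) [NeZero n], N ≤ n → Even n →
        ∀ i : ZMod n,
          1 - ε ≤ ((noise n σ)
            {z | n * p₀ - (n : ℝ) ^ ((3 + a) / 4) ≤
              ∑ m : ZMod n,
                snlmWeight n (δ n) σ (t n) (stepX n) (fun q => stepX n q + z q)
                  (i, jstar n) (m, jstar n - 1)}).toReal := by
  obtain ⟨p₀, hp₀, h⟩ := snlm_below_edge_weights_corollary_general hσ.ne'
  refine ⟨p₀, hp₀, fun a ha δ ⟨c, hc⟩ t ht ε hε => ?_⟩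
  obtain ⟨N, hN⟩ := h δ (isLittleO_natCast_of_le_mul_rpow ha (fun n => Nat.cast_nonneg (δ n)) hc)
    t (fun n => (ht n).le) ε hε
  refine ⟨N, fun n _ hn _ i => (hN n hn i).trans (measureReal_mono fun z hz => ?_)⟩
  rw [Set.mem_ofPred_eq] at hz ⊢
  exact (sub_le_self _ (by positivity)).trans hz
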